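/- Let f ≤ h, let d be a divisor of gcd(2^f−1, q−1), and let w be a divisor of q+1. Let L̄ ≤ M_ℓ be a subgroup such that |L̄ ∩ Z| = w and L̄ is the internal direct product of L̄ ∩ Z and a subgroup H of order 2^f·d that possesses a normal elementary abelian subgroup U of order 2^f and a cyclic subgroup D of order d with H = U·D and U ∩ D trivial (i.e. H is a semidirect product E_{2^f} ⋊ C_d). Then the number N of orbits of L̄ acting on O equals 2 + (q−2^f)/(2^f·d) + (q/2^f)·(q²−1)/(d·w). -/

import Mathlib

/-!
The orbits are counted with Burnside's lemma, applied to `H × (L ∩ Z)`, which is isomorphic to `L`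
because `Z` is central. An element `[a, c, τ]` of `H` has determinant `τ`, whose order divides
`q + 1` and is thus coprime to `|H| = p ^ f * d`; hence `τ = 1`, and `H` acts on `F²` by matrices
that preserve the form `x ^ (q + 1) - y ^ (q + 1)` and have determinant `1`. The set `O` consists of
the `q + 1` isotropic lines of this form, which are its points at infinity, and of the `q ^ 3 - q`
affine points where the form is `1`.

Let `g ∈ H` and let `z = diag(ε, ε, 1)`. If `g z` fixes an affine point, then `ε⁻¹` is an
eigenvalue of `g`, so `ε = 1`, and then `g = 1` because `g` fixes an anisotropic vector. On the
points at infinity `z` is trivial. There `g = 1` fixes all `q + 1` points. Any other `g` has an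
eigenvalue `l` with `l ^ d = 1`, hence in the subfield of order `q`, and its isotropic eigenlines
correspond to the eigenvalues `l` and `l⁻¹`: there is one if `g` has `p`-power order, and there are
two otherwise. As `U` is a normal Sylow `p`-subgroup of `H`, exactly `p ^ f` elements of `H` have
`p`-power order. With `w = |L ∩ Z|`, the fixed point counts add up to
`w * (2 * p ^ f * d - p ^ f + q) + (q ^ 3 - q)`.
-/

open Matrix

noncomputable def glAct {F : Type*} [Field F] (M : GL (Fin 3) F)
    (x : Projectivization F (Fin 3 → F)) : Projectivization F (Fin 3 → F) :=
  Projectivization.map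
    ((LinearMap.GeneralLinearGroup.generalLinearEquiv F (Fin 3 → F)
        (Matrix.GeneralLinearGroup.toLin M)).toLinearMap)
    ((LinearMap.GeneralLinearGroup.generalLinearEquiv F (Fin 3 → F)
        (Matrix.GeneralLinearGroup.toLin M)).injective) x

noncomputable def numOrbits {F : Type*} [Field F] (L : Subgroup (GL (Fin 3) F))
    (O : Set (Projectivization F (Fin 3 → F))) : ℕ :=
  Nat.card ((fun x => {y | ∃ g ∈ L, glAct g x = y}) '' O :
    Set (Set (Projectivization F (Fin 3 → F))))

def hermitianPts (q : ℕ) (F : Type*) [Field F] : Set (Projectivization F (Fin 3 → F)) :=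
  {x | x.rep 1 ^ (q + 1) = x.rep 0 ^ (q + 1) - x.rep 2 ^ (q + 1)}

def MlSet (q : ℕ) (F : Type*) [Field F] : Set (GL (Fin 3) F) :=
  {M | ∃ a c τ : F, a ^ (q + 1) - c ^ (q + 1) = 1 ∧ τ ^ (q + 1) = 1 ∧
    (M : Matrix (Fin 3) (Fin 3) F) = !![a, τ * c ^ q, 0; c, τ * a ^ q, 0; 0, 0, 1]}

def ZSet (q : ℕ) (F : Type*) [Field F] : Set (GL (Fin 3) F) :=
  {M | ∃ ε : F, ε ^ (q + 1) = 1 ∧ (M : Matrix (Fin 3) (Fin 3) F) = Matrix.diagonal ![ε, ε, 1]}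

open MulAction Polynomial
open scoped LinearAlgebra.Projectivization

section OrbitCounting

theorem sum_ncard_inter_fixedBy {G X : Type*} [Group G] [Fintype G] [MulAction G X] [Finite X]
    {S : Set X} (hS : ∀ g : G, ∀ x ∈ S, g • x ∈ S) :
    ∑ g : G, (S ∩ fixedBy X g).ncard = (orbit G '' S).ncard * Nat.card G := by
  classical
  let T : SubMulAction G X := ⟨S, fun g x hx => hS g x hx⟩
  have : Fintype (Quotient (orbitRel G T)) := Fintype.ofFinite _
  have : Fintype T := Fintype.ofFinite _
  have hfix (g : G) : Fintype.card (fixedBy T g) = (S ∩ fixedBy X g).ncard := by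
    have himage : S ∩ fixedBy X g = Subtype.val '' fixedBy T g := by
      ext x
      simp only [Set.mem_inter_iff, mem_fixedBy, Set.mem_image, Subtype.exists, exists_and_right,
        exists_eq_right, Subtype.ext_iff]
      exact ⟨fun hx => ⟨hx.1, hx.2⟩, fun ⟨hx, hgx⟩ => ⟨hx, hgx⟩⟩
    rw [himage, Set.ncard_image_of_injective _ Subtype.val_injective, ← Nat.card_coe_set_eq,
      Nat.card_eq_fintype_card]
  have horbit : Fintype.card (Quotient (orbitRel G T)) = (orbit G '' S).ncard := by
    rw [← Nat.card_eq_fintype_card, ← Nat.card_coe_set_eq, Set.image_eq_range]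
    refine Nat.card_congr ((Quotient.congrRight fun x y => ?_).trans
      (Setoid.quotientKerEquivRange _))
    rw [orbitRel_apply, Setoid.ker_def, orbit_eq_iff]
    exact T.mem_orbit_subMul_iff
  rw [← horbit, Nat.card_eq_fintype_card,
    ← sum_card_fixedBy_eq_card_orbits_mul_card_group G T]
  exact Finset.sum_congr rfl fun g _ => (hfix g).symm

end OrbitCounting

section Groups

theorem ncard_pow_eq_of_isCyclic {G : Type*} [CommGroup G] [IsCyclic G] [Finite G] {m k : ℕ}
    (hmk : m * k = Nat.card G) {u : G} (hu : u ^ k = 1) : {v : G | v ^ m = u}.ncard = m := by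
  have hm : 0 < m := Nat.pos_of_mul_pos_right (hmk ▸ Nat.card_pos)
  have hrange : (powMonoidHom m : G →* G).range = (powMonoidHom k : G →* G).ker := by
    refine Subgroup.eq_of_le_of_card_ge ?_ ?_
    · rintro _ ⟨v, rfl⟩
      rw [MonoidHom.mem_ker, powMonoidHom_apply, powMonoidHom_apply, ← pow_mul, hmk,
        pow_card_eq_one']
    · rw [IsCyclic.card_powMonoidHom_ker, IsCyclic.card_powMonoidHom_range, ← hmk,
        Nat.gcd_mul_left_left, Nat.gcd_mul_right_left, Nat.mul_div_cancel_left k hm]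
  obtain ⟨v, rfl⟩ : u ∈ (powMonoidHom m : G →* G).range := hrange ▸ hu
  calc {x : G | x ^ m = v ^ m}.ncard = Nat.card (powMonoidHom m : G →* G).ker :=
        Nat.card_congr ((powMonoidHom m : G →* G).fiberEquivKer v)
    _ = m := by rw [IsCyclic.card_powMonoidHom_ker, ← hmk, Nat.gcd_mul_right_left]

variable {G : Type*} [Group G]

theorem mem_iff_pow_card_eq_one {U : Subgroup G} [U.Normal] (h : (Nat.card U).Coprime U.index)
    {g : G} : g ∈ U ↔ g ^ Nat.card U = 1 := by
  refine ⟨fun hg => orderOf_dvd_iff_pow_eq_one.1 (U.orderOf_dvd_natCard hg), fun hg => ?_⟩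
  rw [← QuotientGroup.eq_one_iff]
  refine (pow_eq_one_iff_of_coprime h).1 ⟨?_, pow_card_eq_one'⟩
  rw [← QuotientGroup.mk_pow, hg, QuotientGroup.mk_one]

theorem ncard_pow_card_eq_one_of_coprime [Finite G] {U : Subgroup G} [U.Normal]
    (h : (Nat.card U).Coprime U.index) : {g : G | g ^ Nat.card U = 1}.ncard = Nat.card U := by
  rw [← Nat.card_coe_set_eq]
  exact congrArg (fun S : Set G => Nat.card S)
    (Set.ext fun g => (mem_iff_pow_card_eq_one h).symm)

theorem ncard_pow_eq_one_of_normal_subgroupOf {H U : Subgroup G} [Finite H]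
    {m n : ℕ} (hUH : U ≤ H) (hnormal : (U.subgroupOf H).Normal) (hU : Nat.card U = m)
    (hH : Nat.card H = m * n) (hmn : m.Coprime n) : {g : H | g ^ m = 1}.ncard = m := by
  have hcard : Nat.card (U.subgroupOf H) = m :=
    (Nat.card_congr (Subgroup.subgroupOfEquivOfLe hUH).toEquiv).trans hU
  have hindex : (U.subgroupOf H).index = n := by
    refine Nat.eq_of_mul_eq_mul_left (hcard ▸ Nat.card_pos : 0 < m) ?_
    rw [← hH, ← (U.subgroupOf H).card_mul_index, hcard]
  simpa only [hcard] using
    ncard_pow_card_eq_one_of_coprime (U := U.subgroupOf H) (by rwa [hcard, hindex])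

theorem exists_mulEquiv_sup {H K : Subgroup G} (hcomm : ∀ g ∈ H, ∀ k ∈ K, Commute g k)
    (hdisj : Disjoint H K) : ∃ e : H × K ≃* ↥(H ⊔ K), ∀ x, (e x : G) = x.1 * x.2 := by
  let φ := MonoidHom.noncommCoprod H.subtype K.subtype fun g k => hcomm g g.2 k k.2
  have hφ : Function.Injective φ := (MonoidHom.noncommCoprod_injective _ _ _).2
    ⟨Subtype.val_injective, Subtype.val_injective, by rwa [H.range_subtype, K.range_subtype]⟩
  have hrange : φ.range = H ⊔ K :=
    (MonoidHom.noncommCoprod_range _ _ _).trans (by rw [H.range_subtype, K.range_subtype])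
  exact ⟨(MonoidHom.ofInjective hφ).trans (MulEquiv.subgroupCongr hrange), fun _ => rfl⟩

theorem sum_ncard_inter_fixedBy_mul {X : Type*} [MulAction G X] [Finite X] {H K : Subgroup G}
    [Fintype H] [Fintype K] (hcomm : ∀ g ∈ H, ∀ k ∈ K, Commute g k) (hdisj : Disjoint H K)
    {S : Set X} (hS : ∀ g ∈ H ⊔ K, ∀ x ∈ S, g • x ∈ S) :
    ∑ x : H × K, (S ∩ fixedBy X (x.1 * x.2 : G)).ncard =
      (orbit ↥(H ⊔ K) '' S).ncard * (Nat.card H * Nat.card K) := by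
  obtain ⟨e, he⟩ := exists_mulEquiv_sup hcomm hdisj
  have : Fintype ↥(H ⊔ K) := Fintype.ofEquiv _ e.toEquiv
  rw [← Nat.card_prod, Nat.card_congr e.toEquiv,
    ← sum_ncard_inter_fixedBy fun (g : ↥(H ⊔ K)) x => hS g g.2 x, ← e.toEquiv.sum_comp]
  refine Finset.sum_congr rfl fun x _ => congrArg (fun T => (S ∩ T).ncard) (Set.ext fun y => ?_)
  rw [mem_fixedBy, mem_fixedBy, ← he]
  rfl

end Groups

section FieldOfSquareOrder

variable {F : Type*} [Field F] [Fintype F] {q : ℕ}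

theorem one_lt_of_card_eq_sq (hF : Fintype.card F = q ^ 2) : 1 < q :=
  (Nat.one_lt_pow_iff two_ne_zero).1 (hF ▸ Fintype.one_lt_card)

theorem exists_involutive_ringHom_eq_pow (hF : Fintype.card F = q ^ 2) :
    ∃ σ : F →+* F, (∀ x, σ (σ x) = x) ∧ ∀ x, σ x = x ^ q := by
  obtain ⟨p, _, n, hp, hn⟩ := FiniteField.card' F
  have := Fact.mk hp
  obtain ⟨k, -, rfl⟩ := (Nat.dvd_prime_pow hp).1 (hn ▸ hF ▸ dvd_pow_self q two_ne_zero)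
  refine ⟨iterateFrobenius F p k, fun x => ?_, iterateFrobenius_def p k⟩
  rw [iterateFrobenius_def, iterateFrobenius_def, ← pow_mul, ← sq, ← hF, FiniteField.pow_card]

theorem pow_succ_pow_eq_self (hF : Fintype.card F = q ^ 2) (x : F) :
    (x ^ (q + 1)) ^ q = x ^ (q + 1) := by
  obtain ⟨σ, hσσ, hσ⟩ := exists_involutive_ringHom_eq_pow hF
  rw [pow_succ, ← hσ, ← hσ, map_mul, hσσ, mul_comm]

theorem char_dvd_of_card_eq_sq (hF : Fintype.card F = q ^ 2) (p : ℕ) [Fact p.Prime] [CharP F p] :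
    p ∣ q := by
  refine (Fact.out : p.Prime).dvd_of_dvd_pow (n := 2) ?_
  rw [← hF, ← CharP.cast_eq_zero_iff F p, Nat.cast_card_eq_zero]

theorem coprime_char_of_dvd_sub_one (hF : Fintype.card F = q ^ 2) (p : ℕ) [Fact p.Prime]
    [CharP F p] {d : ℕ} (hd : d ∣ q - 1) : d.Coprime p := by
  have hq : (q - 1).Coprime q :=
    (Nat.coprime_self_sub_left (one_lt_of_card_eq_sq hF).le).2 (Nat.coprime_one_left q)
  exact (hq.coprime_dvd_left hd).coprime_dvd_right (char_dvd_of_card_eq_sq hF p)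

theorem coprime_pow_mul_succ_of_dvd_sub_one (hF : Fintype.card F = q ^ 2) (p : ℕ)
    [Fact p.Prime] [CharP F p] (k : ℕ) {d : ℕ} (hd : d ∣ q - 1) (hodd : Odd d) :
    (p ^ k * d).Coprime (q + 1) := by
  refine Nat.Coprime.mul_left (Nat.Coprime.pow_left k ?_) ?_
  · exact Nat.Coprime.coprime_dvd_left (char_dvd_of_card_eq_sq hF p) (by simp)
  · have hgcd : d.gcd (q + 1) ∣ q + 1 - (q - 1) :=
      Nat.dvd_sub (Nat.gcd_dvd_right _ _) ((Nat.gcd_dvd_left _ _).trans hd)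
    rw [show q + 1 - (q - 1) = 2 by have := one_lt_of_card_eq_sq hF; lia] at hgcd
    exact Nat.Coprime.eq_one_of_dvd
      (hodd.coprime_two_right.coprime_dvd_left (Nat.gcd_dvd_left _ _)) hgcd

theorem pow_eq_self_of_pow_eq_one (hF : Fintype.card F = q ^ 2) {d : ℕ} (hd : d ∣ q - 1) {l : F}
    (hl : l ^ d = 1) : l ^ q = l := by
  obtain ⟨m, hm⟩ := hd
  have hq : q = d * m + 1 := by rw [← hm, Nat.sub_add_cancel (one_lt_of_card_eq_sq hF).le]
  rw [hq, pow_succ, pow_mul, hl, one_pow, one_mul]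

theorem ncard_pow_succ_eq (hF : Fintype.card F = q ^ 2) {n : F} (hn : n ≠ 0) (hnq : n ^ q = n) :
    {x : F | x ^ (q + 1) = n}.ncard = q + 1 := by
  have hq := one_lt_of_card_eq_sq hF
  have hunit : Units.mk0 n hn ^ (q - 1) = 1 := Units.ext <| by
    simpa using mul_right_cancel₀ hn
      ((pow_sub_one_mul (by lia) n).trans (hnq.trans (one_mul n).symm))
  have hcard : (q + 1) * (q - 1) = Nat.card Fˣ := by
    rw [Nat.card_units, Nat.card_eq_fintype_card, hF, ← Nat.sq_sub_sq, one_pow]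
  have himage : {x : F | x ^ (q + 1) = n} =
      ((↑) : Fˣ → F) '' {v : Fˣ | v ^ (q + 1) = Units.mk0 n hn} := by
    ext x
    constructor
    · intro hx
      have hx0 : x ≠ 0 := by
        rintro rfl
        exact hn (hx.symm.trans (zero_pow q.succ_ne_zero))
      exact ⟨Units.mk0 x hx0, Units.ext (by simpa using hx), rfl⟩
    · rintro ⟨v, hv, rfl⟩
      simpa using congrArg Units.val hv
  rw [himage, Set.ncard_image_of_injective _ Units.val_injective,
    ncard_pow_eq_of_isCyclic hcard hunit]

/-- The hermitian form `x ^ (q + 1) - y ^ (q + 1)` evaluated at `v = (x, y)`. -/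
def hermNorm (q : ℕ) (v : Fin 2 → F) : F :=
  v 0 ^ (q + 1) - v 1 ^ (q + 1)

theorem ncard_pow_succ_eq_one_add (hF : Fintype.card F = q ^ 2) (y : F)
    [Decidable (y ^ (q + 1) = -1)] :
    {x : F | x ^ (q + 1) = 1 + y ^ (q + 1)}.ncard + (if y ^ (q + 1) = -1 then q else 0) =
      q + 1 := by
  obtain ⟨σ, -, hσ⟩ := exists_involutive_ringHom_eq_pow hF
  split_ifs with hy
  · simp [hy, add_comm]
  · rw [add_zero, ncard_pow_succ_eq hF fun h => hy (eq_neg_of_add_eq_zero_right h)]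
    rw [← hσ, map_add, map_one, hσ, pow_succ_pow_eq_self hF]

theorem ncard_hermNorm_eq_one (hF : Fintype.card F = q ^ 2) :
    {v : Fin 2 → F | hermNorm q v = 1}.ncard = q ^ 3 - q := by
  classical
  obtain ⟨σ, -, hσ⟩ := exists_involutive_ringHom_eq_pow hF
  let e : {v : Fin 2 → F | hermNorm q v = 1} ≃ Σ y : F, {x : F | x ^ (q + 1) = 1 + y ^ (q + 1)} :=
    { toFun := fun v => ⟨v.1 1, v.1 0, eq_add_of_sub_eq v.2⟩
      invFun := fun s => ⟨![s.2, s.1], sub_eq_of_eq_add s.2.2⟩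
      left_inv := fun v => Subtype.ext (funext fun i => by fin_cases i <;> rfl)
      right_inv := fun s => rfl }
  have hsum : {v : Fin 2 → F | hermNorm q v = 1}.ncard =
      ∑ y : F, {x : F | x ^ (q + 1) = 1 + y ^ (q + 1)}.ncard := by
    rw [← Nat.card_coe_set_eq, Nat.card_congr e, Nat.card_sigma]
    rfl
  have hneg : (Finset.univ.filter fun y : F => y ^ (q + 1) = -1).card = q + 1 := by
    rw [← Set.ncard_coe_finset, Finset.coe_filter_univ]
    exact ncard_pow_succ_eq hF (by simp) (by rw [← hσ, map_neg, map_one])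
  have htotal := Finset.sum_congr rfl fun y (_ : y ∈ Finset.univ) => ncard_pow_succ_eq_one_add hF y
  rw [Finset.sum_add_distrib, ← hsum, ← Finset.sum_filter, Finset.sum_const, hneg,
    Finset.sum_const, Finset.card_univ, hF, smul_eq_mul, smul_eq_mul] at htotal
  exact Nat.eq_sub_of_add_eq (by linarith)

end FieldOfSquareOrder

section Points

variable {F : Type*} [Field F] {q : ℕ}

/-- The embedding `A ↦ diag(A, 1)`, through which `M_ℓ` acts on the affine chart `Z = 1`. -/
def blockOne : Matrix (Fin 2) (Fin 2) F →* Matrix (Fin 3) (Fin 3) F where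
  toFun A := !![A 0 0, A 0 1, 0; A 1 0, A 1 1, 0; 0, 0, 1]
  map_one' := by simp [Matrix.one_fin_three]
  map_mul' A B := by simp [Matrix.mul_apply, Fin.sum_univ_two]

theorem blockOne_apply (A : Matrix (Fin 2) (Fin 2) F) :
    blockOne A = !![A 0 0, A 0 1, 0; A 1 0, A 1 1, 0; 0, 0, 1] :=
  rfl

theorem blockOne_injective : Function.Injective (blockOne (F := F)) := fun A B h => by
  simpa [← Matrix.ext_iff, blockOne_apply, Fin.forall_fin_succ, and_assoc] using h

theorem blockOne_mulVec (A : Matrix (Fin 2) (Fin 2) F) (v : Fin 2 → F) (z : F) :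
    blockOne A *ᵥ ![v 0, v 1, z] = ![(A *ᵥ v) 0, (A *ᵥ v) 1, z] := by
  funext i
  fin_cases i <;> simp [blockOne_apply, Matrix.mulVec_eq_sum, Fin.sum_univ_succ]

/-- The point `(x : 1 : 0)` of the line at infinity. -/
def infinitePoint (x : F) : ℙ F (Fin 3 → F) :=
  Projectivization.mk F ![x, 1, 0] fun h => one_ne_zero (congrFun h 1)

/-- The point `(x : y : 1)` of the affine chart `Z = 1`, for `v = (x, y)`. -/
def affinePoint (v : Fin 2 → F) : ℙ F (Fin 3 → F) :=
  Projectivization.mk F ![v 0, v 1, 1] fun h => one_ne_zero (congrFun h 2)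

theorem infinitePoint_injective : Function.Injective (infinitePoint (F := F)) := fun x y h => by
  obtain ⟨a, ha⟩ := (Projectivization.mk_eq_mk_iff' _ _ _ _ _).1 h
  obtain rfl : a = 1 := by simpa using congrFun ha 1
  simpa using (congrFun ha 0).symm

theorem affinePoint_injective : Function.Injective (affinePoint (F := F)) := fun v w h => by
  obtain ⟨a, ha⟩ := (Projectivization.mk_eq_mk_iff' _ _ _ _ _).1 h
  obtain rfl : a = 1 := by simpa using congrFun ha 2
  funext i
  fin_cases i
  · simpa using (congrFun ha 0).symm
  · simpa using (congrFun ha 1).symm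

theorem infinitePoint_ne_affinePoint (x : F) (v : Fin 2 → F) :
    infinitePoint x ≠ affinePoint v := fun h => by
  obtain ⟨a, ha⟩ := (Projectivization.mk_eq_mk_iff' _ _ _ _ _).1 h
  obtain rfl : a = 0 := by simpa using congrFun ha 2
  simpa using congrFun ha 1

theorem mk_mem_hermitianPts {v : Fin 2 → F} {z : F} (hv : ![v 0, v 1, z] ≠ 0) :
    Projectivization.mk F ![v 0, v 1, z] hv ∈ hermitianPts q F ↔
      hermNorm q v = z ^ (q + 1) := by
  obtain ⟨a, ha⟩ := Projectivization.exists_smul_eq_mk_rep F _ hv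
  have ha0 : (a : F) ^ (q + 1) ≠ 0 := pow_ne_zero _ a.ne_zero
  simp only [hermitianPts, Set.mem_ofPred_eq, ← ha, Units.smul_def, Pi.smul_apply, smul_eq_mul,
    mul_pow, ← mul_sub, mul_right_inj' ha0, Matrix.cons_val]
  rw [hermNorm, eq_sub_iff_add_eq, sub_eq_iff_eq_add', eq_comm]

theorem infinitePoint_mem_hermitianPts {x : F} :
    infinitePoint x ∈ hermitianPts q F ↔ x ^ (q + 1) = 1 := by
  refine (mk_mem_hermitianPts (v := ![x, 1]) _).trans ?_
  simp [hermNorm, sub_eq_zero]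

theorem affinePoint_mem_hermitianPts {v : Fin 2 → F} :
    affinePoint v ∈ hermitianPts q F ↔ hermNorm q v = 1 := by
  rw [affinePoint, mk_mem_hermitianPts, one_pow]

theorem eq_infinitePoint_or_eq_affinePoint {P : ℙ F (Fin 3 → F)} (hP : P ∈ hermitianPts q F) :
    (∃ x, P = infinitePoint x) ∨ ∃ v, P = affinePoint v := by
  induction P using Projectivization.ind with
  | h v hv =>
  obtain ⟨x, y, z, rfl⟩ : ∃ x y z, v = ![x, y, z] := ⟨v 0, v 1, v 2, List.ofFn_inj.1 rfl⟩
  replace hP : x ^ (q + 1) - y ^ (q + 1) = z ^ (q + 1) :=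
    (mk_mem_hermitianPts (v := ![x, y]) hv).1 hP
  by_cases hz : z = 0
  · have hy : y ≠ 0 := by
      rintro rfl
      simp_all
    refine .inl ⟨x / y, (Projectivization.mk_eq_mk_iff' _ _ _ _ _).2 ⟨y, ?_⟩⟩
    simp [hz, mul_div_cancel₀ _ hy]
  · refine .inr ⟨![x / z, y / z], (Projectivization.mk_eq_mk_iff' _ _ _ _ _).2 ⟨z, ?_⟩⟩
    simp [mul_div_cancel₀ _ hz]

variable {g : GL (Fin 3) F} {A : Matrix (Fin 2) (Fin 2) F}

theorem smul_mem_hermitianPts (hg : g.val = blockOne A)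
    (hA : ∀ v, hermNorm q (A *ᵥ v) = hermNorm q v) {P : ℙ F (Fin 3 → F)}
    (hP : P ∈ hermitianPts q F) : g • P ∈ hermitianPts q F := by
  induction P using Projectivization.ind with
  | h v hv =>
  obtain ⟨w, z, rfl⟩ : ∃ (w : Fin 2 → F) (z : F), v = ![w 0, w 1, z] :=
    ⟨![v 0, v 1], v 2, List.ofFn_inj.1 rfl⟩
  have hgw : g • ![w 0, w 1, z] = ![(A *ᵥ w) 0, (A *ᵥ w) 1, z] :=
    (congrArg (· *ᵥ ![w 0, w 1, z]) hg).trans (blockOne_mulVec A w z)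
  simp only [Projectivization.smul_mk, hgw]
  rw [mk_mem_hermitianPts, hA]
  exact (mk_mem_hermitianPts hv).1 hP

theorem smul_affinePoint (hg : g.val = blockOne A) (v : Fin 2 → F) :
    g • affinePoint v = affinePoint (A *ᵥ v) := by
  have hgv : g • ![v 0, v 1, 1] = ![(A *ᵥ v) 0, (A *ᵥ v) 1, 1] :=
    (congrArg (· *ᵥ ![v 0, v 1, 1]) hg).trans (blockOne_mulVec A v 1)
  simp only [affinePoint, Projectivization.smul_mk, hgv]

theorem smul_infinitePoint_eq_self (hg : g.val = blockOne A) (x : F) :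
    g • infinitePoint x = infinitePoint x ↔ ∃ l : F, A *ᵥ ![x, 1] = l • ![x, 1] := by
  have hgv : g • ![x, 1, 0] = ![(A *ᵥ ![x, 1]) 0, (A *ᵥ ![x, 1]) 1, 0] :=
    (congrArg (· *ᵥ ![x, 1, 0]) hg).trans (blockOne_mulVec A ![x, 1] 0)
  simp only [infinitePoint, Projectivization.smul_mk, hgv, Projectivization.mk_eq_mk_iff']
  refine exists_congr fun l => ⟨fun h => ?_, fun h => ?_⟩
  · exact List.ofFn_inj.1 (by simpa using And.intro (congrFun h 0).symm (congrFun h 1).symm)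
  · simp [h]

/-- The isotropic eigenlines of `A`: the `x` for which `(x, 1)` is an eigenvector of `A` isotropic
for the form `hermNorm q`. Every isotropic line is spanned by such a vector `(x, 1)`. -/
def isotropicEigenlines (q : ℕ) (A : Matrix (Fin 2) (Fin 2) F) : Set F :=
  {x | x ^ (q + 1) = 1 ∧ ∃ l : F, A *ᵥ ![x, 1] = l • ![x, 1]}

theorem hermitianPts_inter_fixedBy (hg : g.val = blockOne A) :
    hermitianPts q F ∩ fixedBy _ g =
      infinitePoint '' isotropicEigenlines q A ∪
        affinePoint '' {v : Fin 2 → F | hermNorm q v = 1 ∧ A *ᵥ v = v} := by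
  ext P
  constructor
  · rintro ⟨hP, hgP⟩
    obtain ⟨x, rfl⟩ | ⟨v, rfl⟩ := eq_infinitePoint_or_eq_affinePoint hP
    · exact .inl ⟨x, ⟨infinitePoint_mem_hermitianPts.1 hP,
        (smul_infinitePoint_eq_self hg x).1 hgP⟩, rfl⟩
    · exact .inr ⟨v, ⟨affinePoint_mem_hermitianPts.1 hP,
        affinePoint_injective ((smul_affinePoint hg v).symm.trans hgP)⟩, rfl⟩
  · rintro (⟨x, ⟨hx, hgx⟩, rfl⟩ | ⟨v, ⟨hv, hgv⟩, rfl⟩)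
    · exact ⟨infinitePoint_mem_hermitianPts.2 hx, (smul_infinitePoint_eq_self hg x).2 hgx⟩
    · exact ⟨affinePoint_mem_hermitianPts.2 hv, (smul_affinePoint hg v).trans (by rw [hgv])⟩

theorem ncard_hermitianPts_inter_fixedBy [Finite F] (hg : g.val = blockOne A) :
    (hermitianPts q F ∩ fixedBy _ g).ncard =
      (isotropicEigenlines q A).ncard + {v : Fin 2 → F | hermNorm q v = 1 ∧ A *ᵥ v = v}.ncard := by
  rw [hermitianPts_inter_fixedBy hg, Set.ncard_union_eq,
    Set.ncard_image_of_injective _ infinitePoint_injective,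
    Set.ncard_image_of_injective _ affinePoint_injective]
  rw [Set.disjoint_left]
  rintro _ ⟨x, -, rfl⟩ ⟨v, -, h⟩
  exact infinitePoint_ne_affinePoint x v h.symm

end Points

section Eigenvalues

theorem exists_isRoot_charpoly_of_pow_eq_one {n F : Type*} [Fintype n] [DecidableEq n] [Nonempty n]
    [Field F] [Fintype F] {p : ℕ} [Fact p.Prime] [CharP F p] {k d : ℕ}
    (hd : d ∣ Fintype.card F - 1) {A : Matrix n n F} (hA : A ^ (p ^ k * d) = 1) :
    ∃ l : F, l ^ d = 1 ∧ A.charpoly.IsRoot l := by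
  have hcard0 : (X ^ Fintype.card F - X : F[X]) ≠ 0 :=
    FiniteField.X_pow_card_sub_X_ne_zero F Fintype.one_lt_card
  have hcard : (X ^ Fintype.card F - X : F[X]).Splits := by
    simpa using (FiniteField.isSplittingField_sub F F).splits
  have hdvd_card : (X ^ d - 1 : F[X]) ∣ X ^ Fintype.card F - X := by
    refine (dvd_pow_sub_one_of_dvd hd).trans (Dvd.intro X ?_)
    rw [sub_mul, pow_sub_one_mul Fintype.card_ne_zero, one_mul]
  have hdvd : minpoly F A ∣ (X ^ d - 1) ^ p ^ k := by
    rw [sub_pow_expChar_pow, one_pow, ← pow_mul, mul_comm]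
    exact minpoly.dvd F A (by simp [hA])
  obtain ⟨l, hl⟩ := (((hcard.of_dvd hcard0 hdvd_card).pow _).of_dvd
    (pow_ne_zero _ (ne_zero_of_dvd_ne_zero hcard0 hdvd_card)) hdvd).exists_eval_eq_zero
    (minpoly.degree_pos (Matrix.isIntegral A)).ne'
  have hroot : IsRoot ((X ^ d - 1) ^ p ^ k) l := IsRoot.dvd hl hdvd
  exact ⟨l, by simpa [sub_eq_zero, (Fact.out : p.Prime).ne_zero] using hroot,
    IsRoot.dvd hl A.minpoly_dvd_charpoly⟩

theorem pow_eq_one_of_trace_eq_two {R : Type*} [CommRing R] {p : ℕ} [Fact p.Prime] [CharP R p]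
    {A : Matrix (Fin 2) (Fin 2) R} (htrace : A.trace = 2) (hdet : A.det = 1) : A ^ p = 1 := by
  nontriviality R
  have hsq : (A - 1) ^ 2 = 0 := by
    have hcayley := A.aeval_self_charpoly
    simp only [Matrix.charpoly_fin_two, htrace, hdet, map_add, map_sub, map_mul, map_pow, aeval_X,
      map_ofNat, map_one] at hcayley
    rw [← hcayley]
    noncomm_ring
  have hp : (A - 1) ^ p = 0 := pow_eq_zero_of_le (Fact.out : p.Prime).two_le hsq
  rwa [sub_pow_char_of_commute p (Commute.one_right A), one_pow, sub_eq_zero] at hp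

end Eigenvalues

section Unitary

variable {F : Type*} [Field F] {q : ℕ}

/-- The upper left block of `[a, c, τ]`; it is unitary for `hermNorm q` and has determinant `τ` when
`a ^ (q + 1) - c ^ (q + 1) = 1` and `τ ^ (q + 1) = 1`. -/
def unitaryBlock (q : ℕ) (a c τ : F) : Matrix (Fin 2) (Fin 2) F :=
  !![a, τ * c ^ q; c, τ * a ^ q]

variable {a c τ : F}

theorem unitaryBlock_mulVec (v : Fin 2 → F) :
    unitaryBlock q a c τ *ᵥ v = ![a * v 0 + τ * c ^ q * v 1, c * v 0 + τ * a ^ q * v 1] := by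
  funext i
  fin_cases i <;> simp [unitaryBlock, Matrix.mulVec, vecHead, vecTail]

theorem det_unitaryBlock (hac : a ^ (q + 1) - c ^ (q + 1) = 1) :
    (unitaryBlock q a c τ).det = τ := by
  rw [unitaryBlock, Matrix.det_fin_two_of]
  linear_combination τ * hac

theorem isRoot_charpoly_unitaryBlock (hac : a ^ (q + 1) - c ^ (q + 1) = 1) {l : F} :
    (unitaryBlock q a c 1).charpoly.IsRoot l ↔ l ^ 2 - (a + a ^ q) * l + 1 = 0 := by
  rw [Matrix.charpoly_fin_two, det_unitaryBlock hac, unitaryBlock, Matrix.trace_fin_two_of, one_mul]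
  simp

theorem unitaryBlock_one_mulVec_eq_smul {x l : F} :
    unitaryBlock q a c 1 *ᵥ ![x, 1] = l • ![x, 1] ↔ a * x + c ^ q = l * x ∧ c * x + a ^ q = l := by
  rw [unitaryBlock_mulVec]
  simp

theorem isotropicEigenlines_smul {ε : F} (hε : ε ≠ 0) (A : Matrix (Fin 2) (Fin 2) F) :
    isotropicEigenlines q (ε • A) = isotropicEigenlines q A := by
  refine Set.ext fun x => and_congr_right fun _ => ⟨fun ⟨l, hl⟩ => ⟨ε⁻¹ * l, ?_⟩,
    fun ⟨l, hl⟩ => ⟨ε * l, ?_⟩⟩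
  · rw [mul_smul, ← hl, Matrix.smul_mulVec, inv_smul_smul₀ hε]
  · rw [Matrix.smul_mulVec, hl, mul_smul]

variable {g : GL (Fin 3) F}

theorem eq_one_iff_of_val_eq_blockOne {A : Matrix (Fin 2) (Fin 2) F} (hg : g.val = blockOne A) :
    g = 1 ↔ A = 1 := by
  rw [Units.ext_iff, hg, Units.val_one, ← map_one blockOne, blockOne_injective.eq_iff]

theorem exists_val_eq_blockOne_of_mem_MlSet (hg : g ∈ MlSet q F) :
    ∃ a c τ, a ^ (q + 1) - c ^ (q + 1) = 1 ∧ τ ^ (q + 1) = 1 ∧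
      g.val = blockOne (unitaryBlock q a c τ) :=
  hg

theorem exists_val_eq_blockOne_of_pow_eq_one {n : ℕ} (hn : n.Coprime (q + 1))
    (hg : g ∈ MlSet q F) (hpow : g ^ n = 1) : ∃ a c, a ^ (q + 1) - c ^ (q + 1) = 1 ∧
      unitaryBlock q a c 1 ^ n = 1 ∧ g.val = blockOne (unitaryBlock q a c 1) := by
  obtain ⟨a, c, τ, hac, hτ, hgB⟩ := exists_val_eq_blockOne_of_mem_MlSet hg
  have hB : unitaryBlock q a c τ ^ n = 1 :=
    (eq_one_iff_of_val_eq_blockOne (by rw [Units.val_pow_eq_pow_val, hgB, map_pow])).1 hpow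
  have hτn : τ ^ n = 1 := by
    rw [← det_unitaryBlock (τ := τ) hac, ← Matrix.det_pow, hB, Matrix.det_one]
  obtain rfl : τ = 1 := (pow_eq_one_iff_of_coprime hn).1 ⟨hτn, hτ⟩
  exact ⟨a, c, hac, hB, hgB⟩

theorem mem_ZSet_iff :
    g ∈ ZSet q F ↔ ∃ ε : F, ε ^ (q + 1) = 1 ∧ g.val = blockOne (ε • 1) := by
  refine exists_congr fun ε => and_congr_right fun _ => Eq.congr_right ?_
  rw [blockOne_apply]
  ext i j
  fin_cases i <;> fin_cases j <;> simp

/-- The center `Z` of `M_ℓ`, as a subgroup. -/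
def centerSubgroup (q : ℕ) (F : Type*) [Field F] : Subgroup (GL (Fin 3) F) where
  carrier := ZSet q F
  one_mem' := mem_ZSet_iff.2 ⟨1, one_pow _, by rw [one_smul, map_one, Units.val_one]⟩
  mul_mem' hy hz := by
    obtain ⟨δ, hδ, hyδ⟩ := mem_ZSet_iff.1 hy
    obtain ⟨ε, hε, hzε⟩ := mem_ZSet_iff.1 hz
    refine mem_ZSet_iff.2 ⟨δ * ε, by rw [mul_pow, hδ, hε, one_mul], ?_⟩
    rw [Units.val_mul, hyδ, hzε, ← map_mul, smul_mul_smul_comm, one_mul]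
  inv_mem' hz := by
    obtain ⟨ε, hε, hzε⟩ := mem_ZSet_iff.1 hz
    have hε0 : ε ≠ 0 := (IsUnit.of_pow_eq_one hε q.succ_ne_zero).ne_zero
    refine mem_ZSet_iff.2 ⟨ε⁻¹, by rw [inv_pow, hε, inv_one], Units.inv_eq_of_mul_eq_one_right ?_⟩
    rw [hzε, ← map_mul, smul_mul_smul_comm, mul_inv_cancel₀ hε0, one_smul, one_mul, map_one]

theorem commute_of_mem_ZSet {z : GL (Fin 3) F} (hg : g ∈ MlSet q F) (hz : z ∈ ZSet q F) :
    Commute g z := by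
  obtain ⟨a, c, τ, -, -, hgB⟩ := exists_val_eq_blockOne_of_mem_MlSet hg
  obtain ⟨ε, -, hzε⟩ := mem_ZSet_iff.1 hz
  refine Units.ext ?_
  rw [Units.val_mul, Units.val_mul, hgB, hzε, ← map_mul, ← map_mul, mul_smul_one, smul_one_mul]

variable [Fintype F]

theorem unitaryBlock_one_zero_one (hF : Fintype.card F = q ^ 2) :
    unitaryBlock q (1 : F) 0 1 = 1 := by
  rw [unitaryBlock, zero_pow (one_lt_of_card_eq_sq hF).ne_bot, one_pow, mul_one, mul_zero,
    Matrix.one_fin_two]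

theorem unitaryBlock_zero_eq_one_of_pow_eq_one (hF : Fintype.card F = q ^ 2) {n : ℕ}
    (hn : n.Coprime (q + 1)) (ha : a ^ (q + 1) = 1) (hpow : unitaryBlock q a 0 1 ^ n = 1) :
    unitaryBlock q a 0 1 = 1 := by
  have hdiag : unitaryBlock q a 0 1 = Matrix.diagonal ![a, a ^ q] := by
    rw [unitaryBlock, zero_pow (one_lt_of_card_eq_sq hF).ne_bot]
    ext i j
    fin_cases i <;> fin_cases j <;> simp
  have han : a ^ n = 1 := by
    simpa [hdiag, Matrix.diagonal_pow] using congrFun₂ hpow 0 0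
  rw [(pow_eq_one_iff_of_coprime hn).1 ⟨han, ha⟩, unitaryBlock_one_zero_one hF]

theorem hermNorm_unitaryBlock_mulVec (hF : Fintype.card F = q ^ 2)
    (hac : a ^ (q + 1) - c ^ (q + 1) = 1) (hτ : τ ^ (q + 1) = 1) (v : Fin 2 → F) :
    hermNorm q (unitaryBlock q a c τ *ᵥ v) = hermNorm q v := by
  obtain ⟨σ, hσσ, hσ⟩ := exists_involutive_ringHom_eq_pow hF
  simp only [unitaryBlock_mulVec, hermNorm, Matrix.cons_val, pow_succ, ← hσ, map_add, map_mul,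
    hσσ] at hac hτ ⊢
  linear_combination (v 0 * σ (v 0) - τ * σ τ * v 1 * σ (v 1)) * hac - v 1 * σ (v 1) * hτ

theorem unitaryBlock_one_eq_one_of_mulVec_eq_self (hF : Fintype.card F = q ^ 2) {v : Fin 2 → F}
    (hv : hermNorm q v ≠ 0) (hfix : unitaryBlock q a c 1 *ᵥ v = v) : unitaryBlock q a c 1 = 1 := by
  obtain ⟨σ, hσσ, hσ⟩ := exists_involutive_ringHom_eq_pow hF
  rw [unitaryBlock_mulVec, one_mul, one_mul, ← hσ, ← hσ] at hfix
  have h0 : a * v 0 + σ c * v 1 = v 0 := congrFun hfix 0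
  have h1 : c * v 0 + σ a * v 1 = v 1 := congrFun hfix 1
  have h1σ : σ c * σ (v 0) + a * σ (v 1) = σ (v 1) := by
    simpa only [map_add, map_mul, hσσ] using congrArg σ h1
  simp only [hermNorm, pow_succ, ← hσ] at hv
  obtain rfl : a = 1 := by
    refine sub_eq_zero.1 ((mul_eq_zero_iff_right hv).1 ?_)
    linear_combination σ (v 0) * h0 - v 1 * h1σ
  have hcv0 : c * v 0 = 0 := by simpa using h1
  have hcv1 : c * σ (v 1) = 0 := by simpa [hσσ] using congrArg σ h0
  obtain rfl : c = 0 := by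
    refine (mul_eq_zero_iff_right hv).1 ?_
    linear_combination σ (v 0) * hcv0 - v 1 * hcv1
  exact unitaryBlock_one_zero_one hF

theorem isotropicEigenlines_unitaryBlock (hF : Fintype.card F = q ^ 2)
    (hac : a ^ (q + 1) - c ^ (q + 1) = 1) (hc : c ≠ 0) :
    isotropicEigenlines q (unitaryBlock q a c 1) =
      (fun l => (l - a ^ q) / c) '' {l | l ^ q = l ∧ l ^ 2 - (a + a ^ q) * l + 1 = 0} := by
  obtain ⟨σ, hσσ, hσ⟩ := exists_involutive_ringHom_eq_pow hF
  have hσc : σ c ≠ 0 := (map_ne_zero σ).2 hc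
  ext x
  simp only [isotropicEigenlines, unitaryBlock_one_mulVec_eq_smul, Set.mem_ofPred_eq,
    Set.mem_image, pow_succ, ← hσ] at hac ⊢
  constructor
  · rintro ⟨hx, l, h0, h1⟩
    have h1σ : σ c * σ x + a = σ l := by
      simpa only [map_add, map_mul, hσσ] using congrArg σ h1
    refine ⟨l, ⟨?_, ?_⟩, ?_⟩
    · linear_combination σ x * h0 + (l - a) * hx - h1σ
    · linear_combination -(l - a) * h1 - c * h0 - hac
    · rw [div_eq_iff hc]
      linear_combination -h1
  · rintro ⟨l, ⟨hlσ, hl⟩, rfl⟩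
    refine ⟨?_, l, ?_, ?_⟩
    · rw [map_div₀, map_sub, hσσ, hlσ, div_mul_div_comm, div_eq_one_iff_eq (mul_ne_zero hσc hc)]
      linear_combination hl + hac
    · field_simp
      linear_combination -hl - hac
    · rw [mul_div_cancel₀ _ hc, sub_add_cancel]

theorem ncard_isotropicEigenlines_eq {l : F} (hF : Fintype.card F = q ^ 2)
    (hac : a ^ (q + 1) - c ^ (q + 1) = 1) (hc : c ≠ 0) (hlq : l ^ q = l)
    (hl : (unitaryBlock q a c 1).charpoly.IsRoot l) :
    (isotropicEigenlines q (unitaryBlock q a c 1)).ncard = ({l, l⁻¹} : Set F).ncard := by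
  rw [isRoot_charpoly_unitaryBlock hac] at hl
  have hl0 : l ≠ 0 := by
    rintro rfl
    simp at hl
  have hroots : {m | m ^ q = m ∧ m ^ 2 - (a + a ^ q) * m + 1 = 0} = {l, l⁻¹} := by
    ext m
    constructor
    · rintro ⟨-, hm⟩
      have hml : (m - l) * (l * m - 1) = 0 := by linear_combination l * hm - m * hl
      exact (mul_eq_zero.1 hml).imp sub_eq_zero.1
        fun h => eq_inv_of_mul_eq_one_right (sub_eq_zero.1 h)
    · rintro (rfl | rfl)
      · exact ⟨hlq, hl⟩
      · refine ⟨by rw [inv_pow, hlq], ?_⟩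
        field_simp
        linear_combination hl
  rw [isotropicEigenlines_unitaryBlock hF hac hc, hroots]
  exact Set.ncard_image_of_injective _ fun x y hxy => by simpa [hc] using hxy

end Unitary

section FixedPoints

variable {F : Type*} [Field F] [Fintype F] {p q d : ℕ} [Fact p.Prime] [CharP F p]

section Block

variable {a c : F} {k : ℕ}

theorem ncard_isotropicEigenlines_of_pow_eq_one (hF : Fintype.card F = q ^ 2)
    (hac : a ^ (q + 1) - c ^ (q + 1) = 1) (hc : c ≠ 0)
    (hpow : unitaryBlock q a c 1 ^ p ^ k = 1) :
    (isotropicEigenlines q (unitaryBlock q a c 1)).ncard = 1 := by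
  obtain ⟨l, hl1, hl⟩ :=
    exists_isRoot_charpoly_of_pow_eq_one (k := k) (one_dvd _) (by rwa [mul_one])
  obtain rfl : l = 1 := by simpa using hl1
  rw [ncard_isotropicEigenlines_eq hF hac hc (one_pow q) hl, inv_one, Set.pair_eq_singleton,
    Set.ncard_singleton]

theorem ncard_isotropicEigenlines_of_pow_ne_one (hF : Fintype.card F = q ^ 2)
    (hd : d ∣ q - 1) (hodd : Odd d) (hac : a ^ (q + 1) - c ^ (q + 1) = 1) (hc : c ≠ 0)
    (hpow : unitaryBlock q a c 1 ^ (p ^ k * d) = 1) (hne : unitaryBlock q a c 1 ^ p ^ k ≠ 1) :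
    (isotropicEigenlines q (unitaryBlock q a c 1)).ncard = 2 := by
  have hdF : d ∣ Fintype.card F - 1 := by
    rw [hF, ← one_pow 2, Nat.sq_sub_sq]
    exact hd.mul_left _
  obtain ⟨l, hld, hl⟩ := exists_isRoot_charpoly_of_pow_eq_one hdF hpow
  have hlq := pow_eq_self_of_pow_eq_one hF hd hld
  rw [ncard_isotropicEigenlines_eq hF hac hc hlq hl, Set.ncard_pair]
  intro hinv
  have hl0 : l ≠ 0 := (IsUnit.of_pow_eq_one hld hodd.pos.ne').ne_zero
  have hl2 : l ^ 2 = 1 := by rw [sq, ← mul_inv_cancel₀ hl0, ← hinv]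
  obtain rfl : l = 1 := (pow_eq_one_iff_of_coprime hodd.coprime_two_right).1 ⟨hld, hl2⟩
  rw [isRoot_charpoly_unitaryBlock hac] at hl
  have hp : unitaryBlock q a c 1 ^ p = 1 := by
    refine pow_eq_one_of_trace_eq_two ?_ (det_unitaryBlock hac)
    rw [unitaryBlock, Matrix.trace_fin_two_of]
    linear_combination -hl
  have hdp := coprime_char_of_dvd_sub_one hF p hd
  refine hne ((pow_eq_one_iff_of_coprime hdp).1 ⟨by rw [← pow_mul, hpow], ?_⟩)
  rw [← pow_mul, mul_comm, pow_mul, hp, one_pow]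

theorem ncard_isotropicEigenlines [DecidableEq F] (hF : Fintype.card F = q ^ 2)
    (hd : d ∣ q - 1) (hodd : Odd d) (hac : a ^ (q + 1) - c ^ (q + 1) = 1)
    (hpow : unitaryBlock q a c 1 ^ (p ^ k * d) = 1) :
    (isotropicEigenlines q (unitaryBlock q a c 1)).ncard +
        (if unitaryBlock q a c 1 ^ p ^ k = 1 then 1 else 0) =
      2 + if unitaryBlock q a c 1 = 1 then q else 0 := by
  by_cases hB : unitaryBlock q a c 1 = 1
  · have hall : isotropicEigenlines q (1 : Matrix (Fin 2) (Fin 2) F) = {x | x ^ (q + 1) = 1} :=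
      Set.ext fun x => and_iff_left ⟨1, by rw [one_mulVec, one_smul]⟩
    rw [hB, one_pow, if_pos rfl, if_pos rfl, hall, ncard_pow_succ_eq hF one_ne_zero (one_pow q)]
    ring
  · have hc : c ≠ 0 := by
      rintro rfl
      exact hB (unitaryBlock_zero_eq_one_of_pow_eq_one hF
        (coprime_pow_mul_succ_of_dvd_sub_one hF p k hd hodd) (by simpa using hac) hpow)
    rw [if_neg hB]
    split_ifs with hp
    · rw [ncard_isotropicEigenlines_of_pow_eq_one hF hac hc hp]
    · rw [ncard_isotropicEigenlines_of_pow_ne_one hF hd hodd hac hc hpow hp]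

end Block

theorem ncard_hermNorm_eq_one_fixed [DecidableEq F] {a c ε : F} {n : ℕ}
    (hF : Fintype.card F = q ^ 2) (hn : n.Coprime (q + 1)) (hε : ε ^ (q + 1) = 1)
    (hpow : unitaryBlock q a c 1 ^ n = 1) :
    {v | hermNorm q v = 1 ∧ (ε • unitaryBlock q a c 1) *ᵥ v = v}.ncard =
      if unitaryBlock q a c 1 = 1 ∧ ε = 1 then q ^ 3 - q else 0 := by
  split_ifs with h
  · simpa [h] using ncard_hermNorm_eq_one hF
  rw [Set.ncard_eq_zero, Set.eq_empty_iff_forall_notMem]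
  rintro v ⟨hv, hfix⟩
  have hεn : ε ^ n = 1 := by
    have hv0 : v ≠ 0 := by
      rintro rfl
      simp [hermNorm] at hv
    have hfix_pow : (ε • unitaryBlock q a c 1) ^ n *ᵥ v = v :=
      pow_mem (S := stabilizerSubmonoid (Matrix (Fin 2) (Fin 2) F) v) hfix n
    rw [_root_.smul_pow, hpow, Matrix.smul_mulVec, one_mulVec] at hfix_pow
    exact smul_left_injective F hv0 (hfix_pow.trans (one_smul F v).symm)
  obtain rfl : ε = 1 := (pow_eq_one_iff_of_coprime hn).1 ⟨hεn, hε⟩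
  rw [one_smul] at hfix
  exact h ⟨unitaryBlock_one_eq_one_of_mulVec_eq_self hF (hv ▸ one_ne_zero) hfix, rfl⟩

section Group

variable {g : GL (Fin 3) F}

theorem smul_mem_hermitianPts_of_mem_MlSet (hF : Fintype.card F = q ^ 2) (hg : g ∈ MlSet q F)
    {P : ℙ F (Fin 3 → F)} (hP : P ∈ hermitianPts q F) : g • P ∈ hermitianPts q F := by
  obtain ⟨a, c, τ, hac, hτ, hgB⟩ := exists_val_eq_blockOne_of_mem_MlSet hg
  exact smul_mem_hermitianPts hgB (hermNorm_unitaryBlock_mulVec hF hac hτ) hP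

-- The correction for `p`-power order stands on the left so that no subtraction occurs.
open scoped Classical in
theorem ncard_hermitianPts_inter_fixedBy_mul (hF : Fintype.card F = q ^ 2) (hd : d ∣ q - 1)
    (hodd : Odd d) {k : ℕ} (hg : g ∈ MlSet q F) (hpow : g ^ (p ^ k * d) = 1) {z : GL (Fin 3) F}
    (hz : z ∈ ZSet q F) :
    (hermitianPts q F ∩ fixedBy _ (g * z)).ncard + (if g ^ p ^ k = 1 then 1 else 0) =
      2 + (if g = 1 then q else 0) + if g = 1 ∧ z = 1 then q ^ 3 - q else 0 := by
  have hn := coprime_pow_mul_succ_of_dvd_sub_one hF p k hd hodd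
  obtain ⟨a, c, hac, hB, hgB⟩ := exists_val_eq_blockOne_of_pow_eq_one hn hg hpow
  obtain ⟨ε, hε, hzε⟩ := mem_ZSet_iff.1 hz
  have hε0 : ε ≠ 0 := (IsUnit.of_pow_eq_one hε q.succ_ne_zero).ne_zero
  have hgz : (g * z).val = blockOne (ε • unitaryBlock q a c 1) := by
    rw [Units.val_mul, hgB, hzε, ← map_mul, mul_smul_comm, mul_one]
  have hgk : g ^ p ^ k = 1 ↔ unitaryBlock q a c 1 ^ p ^ k = 1 :=
    eq_one_iff_of_val_eq_blockOne (by rw [Units.val_pow_eq_pow_val, hgB, map_pow])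
  have hz1 : z = 1 ↔ ε = 1 := by
    rw [eq_one_iff_of_val_eq_blockOne hzε]
    exact (smul_left_injective F one_ne_zero).eq_iff' (one_smul F _)
  rw [ncard_hermitianPts_inter_fixedBy hgz, isotropicEigenlines_smul hε0,
    ncard_hermNorm_eq_one_fixed hF hn hε hB, add_right_comm]
  simp only [hgk, hz1, eq_one_iff_of_val_eq_blockOne hgB]
  rw [ncard_isotropicEigenlines hF hd hodd hac hB]

end Group

end FixedPoints

section OrbitNumber

variable {F : Type*} [Field F] {p q d f : ℕ}

theorem numOrbits_eq_ncard (L : Subgroup (GL (Fin 3) F)) (O : Set (ℙ F (Fin 3 → F))) :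
    numOrbits L O = (orbit L '' O).ncard := by
  -- `glAct` unfolds to Mathlib's action of `GL (Fin 3) F` on the projective plane.
  have horbit (x : ℙ F (Fin 3 → F)) : {y | ∃ g ∈ L, glAct g x = y} = orbit L x :=
    Set.ext fun y => ⟨fun ⟨g, hg, h⟩ => ⟨⟨g, hg⟩, h⟩, fun ⟨g, h⟩ => ⟨g, g.2, h⟩⟩
  simp only [numOrbits, horbit, Nat.card_coe_set_eq]

open scoped Classical in
theorem numOrbits_sup_mul_card [Fintype F] [Fact p.Prime] [CharP F p]
    (hF : Fintype.card F = q ^ 2) (hd : d ∣ q - 1) (hodd : Odd d)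
    {H W : Subgroup (GL (Fin 3) F)} (hMl : ↑(H ⊔ W) ⊆ MlSet q F) (hWZ : ↑W ⊆ ZSet q F)
    (hdisj : Disjoint H W) (hHcard : Nat.card H = p ^ f * d)
    (hpcard : {g : H | g ^ p ^ f = 1}.ncard = p ^ f) :
    numOrbits (H ⊔ W) (hermitianPts q F) * (p ^ f * d * Nat.card W) + Nat.card W * p ^ f =
      Nat.card W * (2 * (p ^ f * d) + q) + (q ^ 3 - q) := by
  have hHMl : ↑H ⊆ MlSet q F := (SetLike.coe_subset_coe.2 le_sup_left).trans hMl
  have hburnside := sum_ncard_inter_fixedBy_mul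
    (fun g hg z hz => commute_of_mem_ZSet (hHMl hg) (hWZ hz)) hdisj
    (fun g hg P hP => smul_mem_hermitianPts_of_mem_MlSet hF (hMl hg) hP)
  have hfixed (x : H × W) :
      (hermitianPts q F ∩ fixedBy _ (x.1 * x.2 : GL (Fin 3) F)).ncard +
          (if x.1 ^ p ^ f = 1 then 1 else 0) =
        2 + (if x.1 = 1 then q else 0) + if x = 1 then q ^ 3 - q else 0 := by
    have hpow : x.1 ^ (p ^ f * d) = 1 := hHcard ▸ pow_card_eq_one'
    simpa only [← Subgroup.coe_pow, OneMemClass.coe_eq_one, ← Prod.mk_eq_one] using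
      ncard_hermitianPts_inter_fixedBy_mul hF hd hodd (hHMl x.1.2) (congrArg Subtype.val hpow)
        (hWZ x.2.2)
  have hsum_fst (φ : H → ℕ) : ∑ x : H × W, φ x.1 = Nat.card W * ∑ g, φ g := by
    simp only [Fintype.sum_prod_type_right, Finset.sum_const, Finset.card_univ,
      Nat.card_eq_fintype_card, smul_eq_mul]
  have hsum_pow : ∑ g : H, (if g ^ p ^ f = 1 then 1 else 0) = p ^ f := by
    rw [Finset.sum_boole, ← Set.ncard_coe_finset, Finset.coe_filter_univ, hpcard, Nat.cast_id]
  have hsum := Finset.sum_congr rfl fun x (_ : x ∈ Finset.univ) => hfixed x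
  rw [Finset.sum_add_distrib, Finset.sum_add_distrib, Finset.sum_add_distrib, hburnside,
    hsum_fst fun g => if g ^ p ^ f = 1 then 1 else 0, hsum_pow,
    hsum_fst fun g => if g = 1 then q else 0, Fintype.sum_ite_eq', Fintype.sum_ite_eq',
    Finset.sum_const, Finset.card_univ, ← Nat.card_eq_fintype_card, Nat.card_prod, hHcard,
    smul_eq_mul, ← numOrbits_eq_ncard] at hsum
  rw [hsum]
  ring

end OrbitNumber

theorem eq_add_div_add_mul_div_of_mul_add_eq {K : Type*} [Field K] [CharZero K]
    {N r d q w : ℕ} (hr : r ≠ 0) (hd : d ≠ 0) (hw : w ≠ 0)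
    (h : N * (r * d * w) + w * r = w * (2 * (r * d) + q) + (q ^ 3 - q)) :
    (N : K) = 2 + ((q : K) - r) / (r * d) + ((q : K) / r) * (((q : K) ^ 2 - 1) / (d * w)) := by
  have hcast := congrArg (Nat.cast (R := K)) h
  push_cast [Nat.cast_sub (Nat.le_self_pow three_ne_zero q)] at hcast
  field_simp
  linear_combination hcast

theorem stmt11_general {p q f d w : ℕ} [Fact p.Prime] {F : Type*} [Field F] [Fintype F] [CharP F p]
    (hF : Fintype.card F = q ^ 2) (hd : d ∣ q - 1) (hodd : Odd d)
    (L : Subgroup (GL (Fin 3) F)) (hLMl : (L : Set (GL (Fin 3) F)) ⊆ MlSet q F)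
    (hZcard : Nat.card ((L : Set (GL (Fin 3) F)) ∩ ZSet q F : Set (GL (Fin 3) F)) = w)
    (H U : Subgroup (GL (Fin 3) F)) (hHcard : Nat.card H = p ^ f * d)
    (hUH : U ≤ H) (hUnormal : (U.subgroupOf H).Normal) (hUcard : Nat.card U = p ^ f)
    (hgen : L = Subgroup.closure
      ((H : Set (GL (Fin 3) F)) ∪ ((L : Set (GL (Fin 3) F)) ∩ ZSet q F)))
    (htriv : (H : Set (GL (Fin 3) F)) ∩ ((L : Set (GL (Fin 3) F)) ∩ ZSet q F) ⊆ {1}) :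
    (numOrbits L (hermitianPts q F) : ℚ)
      = 2 + ((q : ℚ) - p ^ f) / (p ^ f * (d : ℚ))
        + ((q : ℚ) / p ^ f) * (((q : ℚ) ^ 2 - 1) / ((d : ℚ) * (w : ℚ))) := by
  set W : Subgroup (GL (Fin 3) F) := L ⊓ centerSubgroup q F
  have hWcard : Nat.card W = w := hZcard
  have hL : L = H ⊔ W :=
    hgen.trans <| by rw [Subgroup.closure_union, H.closure_eq]; exact congrArg _ W.closure_eq
  have hdisj : Disjoint H W := disjoint_iff_inf_le.2 htriv
  have hdp : d.Coprime p := coprime_char_of_dvd_sub_one hF p hd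
  have hpcard : {g : H | g ^ p ^ f = 1}.ncard = p ^ f :=
    ncard_pow_eq_one_of_normal_subgroupOf hUH hUnormal hUcard hHcard (hdp.symm.pow_left f)
  have hcount := numOrbits_sup_mul_card hF hd hodd (hL ▸ hLMl) (W := W) Set.inter_subset_right
    hdisj hHcard hpcard
  rw [hWcard, ← hL] at hcount
  have hw : w ≠ 0 := hWcard ▸ Nat.card_pos.ne'
  exact_mod_cast eq_add_div_add_mul_div_of_mul_add_eq (K := ℚ)
    (pow_ne_zero f (Fact.out : p.Prime).ne_zero) hodd.pos.ne' hw hcount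

theorem stmt11 (h q f d w : ℕ) (hh : 1 ≤ h) (hq : q = 2 ^ h)
    (F : Type*) [Field F] [Fintype F] (hF : Fintype.card F = q ^ 2)
    (hf : f ≤ h) (hd : d ∣ Nat.gcd (2 ^ f - 1) (q - 1)) (hw : w ∣ q + 1)
    (L : Subgroup (GL (Fin 3) F)) (hLMl : (L : Set (GL (Fin 3) F)) ⊆ MlSet q F)
    (hZcard : Nat.card ((L : Set (GL (Fin 3) F)) ∩ ZSet q F : Set (GL (Fin 3) F)) = w)
    (H U D : Subgroup (GL (Fin 3) F))
    (hHcard : Nat.card H = 2 ^ f * d)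
    (hUH : U ≤ H) (hUnormal : (U.subgroupOf H).Normal)
    (hUcard : Nat.card U = 2 ^ f) (hUelem : ∀ g ∈ U, g ^ 2 = 1)
    (hDH : D ≤ H) (hDcard : Nat.card D = d) (hDcyc : IsCyclic ↥D)
    (hUD : H = U ⊔ D)
    (hUDtriv : (U : Set (GL (Fin 3) F)) ∩ (D : Set (GL (Fin 3) F)) ⊆ {1})
    (hgen : L = Subgroup.closure
      ((H : Set (GL (Fin 3) F)) ∪ ((L : Set (GL (Fin 3) F)) ∩ ZSet q F)))
    (htriv : (H : Set (GL (Fin 3) F)) ∩ ((L : Set (GL (Fin 3) F)) ∩ ZSet q F) ⊆ {1}) :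
    (numOrbits L (hermitianPts q F) : ℚ)
      = 2 + ((q : ℚ) - 2 ^ f) / (2 ^ f * (d : ℚ))
        + ((q : ℚ) / 2 ^ f) * (((q : ℚ) ^ 2 - 1) / ((d : ℚ) * (w : ℚ))) := by
  have : CharP F 2 := charP_of_card_eq_prime_pow (by rw [hF, hq, ← pow_mul])
  have hdq : d ∣ q - 1 := hd.trans (Nat.gcd_dvd_right _ _)
  have hodd : Odd d := Nat.coprime_two_right.1 (coprime_char_of_dvd_sub_one hF 2 hdq)
  exact_mod_cast stmt11_general (p := 2) hF hdq hodd L hLMl hZcard H U hHcard hUH hUnormal hUcard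
    hgen htriv
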